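/- arXiv:1806.05602 — 3 statements merged into one kernel-verified Lean document; each statement's English description precedes it below -/
import Mathlib

section
/- Let α be a finite type with cardinality 2M, let A be a subset of α with cardinality D, and let k ≤ M. Then the number of fixed-point-free involutions σ of α having at least k orbits {x, σ(x)} contained in A is at most C(D, 2k) · (2k−1)!! · (2(M−k)−1)!!. -/
open Nat

/-!
Proof idea: the points of `A` that `σ` keeps inside `A` form a `σ`-invariant set, a union of
two-point orbits, so if this set has at least `2k` elements it contains a `σ`-invariant set `T` of
exactly `2k`. There are `C(D, 2k)` candidates for `T`, and an involution leaving `T` invariant is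
a pair of involutions of `T` and of its complement; fixed-point-free involutions of `2n` points
form the conjugacy class of cycle type `(2, …, 2)`, with `(2n)! / (2ⁿ n!) = (2n - 1)‼` elements. The
bound is not an equality because a single `σ` may admit several `T`.
-/

section

open Finset Equiv

/-- Fixed-point-free involutions, which encode the perfect matchings of `α` into the pairs
`{x, f x}`. Both conditions are under a single quantifier over `x`, as in the main theorem, and `f`
is a plain function, to which permutations coerce. -/
abbrev IsFixedPointFreeInvolution {α : Type*} (f : α → α) : Prop :=
  ∀ x, f (f x) = x ∧ f x ≠ x

theorem factorial_eq_doubleFactorial_mul_doubleFactorial_sub_one (n : ℕ) :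
    n ! = n‼ * (n - 1)‼ := by
  cases n with
  | zero => rfl
  | succ n => exact factorial_eq_mul_doubleFactorial n

theorem card_cycleType_eq_replicate_mul {α : Type*} [Fintype α] [DecidableEq α] {n r : ℕ}
    (hr : 2 ≤ r) (hα : Fintype.card α = r * n) :
    #{σ : Perm α | σ.cycleType = Multiset.replicate n r} * (r ^ n * n !) = (r * n)! := by
  have hcount : ∏ i ∈ (Multiset.replicate n r).toFinset,
      ((Multiset.replicate n r).count i)! = n ! := by
    rcases eq_or_ne n 0 with rfl | hn
    · simp
    · simp [Multiset.toFinset_replicate, hn]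
  have hadmissible : (Multiset.replicate n r).sum ≤ Fintype.card α ∧
      ∀ a ∈ Multiset.replicate n r, 2 ≤ a :=
    ⟨by simp [hα, mul_comm], fun a ha ↦ (Multiset.eq_of_mem_replicate ha).symm ▸ hr⟩
  have hcentralizer := Perm.card_of_cycleType_mul_eq α (Multiset.replicate n r)
  rw [if_pos hadmissible, hcount, hα] at hcentralizer
  simpa [mul_comm n r] using hcentralizer

theorem isFixedPointFreeInvolution_iff_sq_eq_one_and_support_eq_univ {α : Type*} [Fintype α]
    [DecidableEq α] {σ : Perm α} :
    IsFixedPointFreeInvolution σ ↔ σ ^ 2 = 1 ∧ σ.support = univ := by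
  simp [IsFixedPointFreeInvolution, forall_and, Perm.ext_iff, Finset.ext_iff, pow_two]

theorem isFixedPointFreeInvolution_iff_cycleType_eq_replicate {α : Type*} [Fintype α]
    [DecidableEq α] {n : ℕ} (hα : Fintype.card α = 2 * n) {σ : Perm α} :
    IsFixedPointFreeInvolution σ ↔ σ.cycleType = Multiset.replicate n 2 := by
  rw [isFixedPointFreeInvolution_iff_sq_eq_one_and_support_eq_univ,
    ← Finset.card_eq_iff_eq_univ, ← Perm.sum_cycleType, hα, Perm.pow_prime_eq_one_iff,
    Multiset.eq_replicate, and_comm, and_congr_left_iff]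
  intro htwo
  rw [Multiset.eq_replicate_card.2 htwo, Multiset.sum_replicate, Multiset.card_replicate]
  lia

theorem card_isFixedPointFreeInvolution {α : Type*} [Fintype α] [DecidableEq α] {n : ℕ}
    (hα : Fintype.card α = 2 * n) :
    #{σ : Perm α | IsFixedPointFreeInvolution σ} = (2 * n - 1)‼ := by
  simp only [isFixedPointFreeInvolution_iff_cycleType_eq_replicate hα]
  apply Nat.eq_of_mul_eq_mul_right (show 0 < 2 ^ n * (n !) by positivity)
  rw [card_cycleType_eq_replicate_mul le_rfl hα,
    factorial_eq_doubleFactorial_mul_doubleFactorial_sub_one, doubleFactorial_two_mul, mul_comm]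

theorem isFixedPointFreeInvolution_subtypeCongr {α : Type*} {p : α → Prop} [DecidablePred p]
    {τ : Perm {x // p x}} {υ : Perm {x // ¬ p x}} :
    IsFixedPointFreeInvolution (τ.subtypeCongr υ) ↔
      IsFixedPointFreeInvolution τ ∧ IsFixedPointFreeInvolution υ := by
  constructor
  · intro h
    refine ⟨fun x ↦ ?_, fun x ↦ ?_⟩
    · simpa [Subtype.ext_iff] using h x
    · simpa [Subtype.ext_iff] using h x
  · rintro ⟨hτ, hυ⟩ x
    by_cases hx : p x
    · simpa [hx, Subtype.ext_iff] using hτ ⟨x, hx⟩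
    · simpa [hx, Subtype.ext_iff] using hυ ⟨x, hx⟩

theorem involutive_apply_iff {α : Type*} {f : α → α} (hf : Function.Involutive f) {p : α → Prop}
    (hp : ∀ x, p x → p (f x)) (x : α) : p (f x) ↔ p x :=
  ⟨fun h ↦ hf x ▸ hp _ h, hp x⟩

namespace IsFixedPointFreeInvolution

variable {α : Type*} {f : α → α}

theorem involutive (hf : IsFixedPointFreeInvolution f) : Function.Involutive f :=
  fun x ↦ (hf x).1

theorem exists_invariant_subset_card_eq (hf : IsFixedPointFreeInvolution f)
    {B : Finset α} (hB : ∀ x ∈ B, f x ∈ B) {k : ℕ} (hk : 2 * k ≤ #B) :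
    ∃ T ⊆ B, #T = 2 * k ∧ ∀ x ∈ T, f x ∈ T := by
  classical
  induction k with
  | zero => exact ⟨∅, by simp⟩
  | succ k ih =>
    obtain ⟨T, hTB, hT, hinv⟩ := ih (by lia)
    obtain ⟨x, hxB, hxT⟩ := exists_mem_notMem_of_card_lt_card (show #T < #B by lia)
    have hfxT : f x ∉ T := (involutive_apply_iff hf.involutive hinv x).not.2 hxT
    have hx : x ∉ insert (f x) T := by simp [hxT, (hf x).2.symm]
    refine ⟨insert x (insert (f x) T), ?_, ?_, ?_⟩
    · simp [insert_subset_iff, hxB, hB x hxB, hTB]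
    · rw [card_insert_of_notMem hx, card_insert_of_notMem hfxT, hT]
      ring
    · simp +contextual [hf.involutive x, hinv]

end IsFixedPointFreeInvolution

theorem card_isFixedPointFreeInvolution_and_invariant_eq_mul {α : Type*} [Fintype α]
    [DecidableEq α] (p : α → Prop) [DecidablePred p] :
    #{σ : Perm α | IsFixedPointFreeInvolution σ ∧ ∀ x, p x → p (σ x)} =
      #{τ : Perm {x // p x} | IsFixedPointFreeInvolution τ} *
        #{υ : Perm {x // ¬ p x} | IsFixedPointFreeInvolution υ} := by
  rw [← card_product, ← card_image_of_injective _ (Perm.subtypeCongrHom_injective p)]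
  congr 1
  ext σ
  simp only [mem_filter_univ, mem_image, mem_product, Prod.exists]
  constructor
  · rintro ⟨hσ, hp⟩
    have hiff := involutive_apply_iff hσ.involutive hp
    have hrestrict :
        (σ.subtypePerm hiff).subtypeCongr (σ.subtypePerm fun x ↦ (hiff x).not) = σ := by
      ext x
      by_cases hx : p x <;> simp [hx]
    exact ⟨_, _, isFixedPointFreeInvolution_subtypeCongr.1 (hrestrict.symm ▸ hσ), hrestrict⟩
  · rintro ⟨τ, υ, hτυ, rfl⟩
    refine ⟨isFixedPointFreeInvolution_subtypeCongr.2 hτυ, fun x hx ↦ ?_⟩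
    simpa [Perm.subtypeCongrHom, hx] using (τ ⟨x, hx⟩).2

theorem card_isFixedPointFreeInvolution_and_invariant {α : Type*} [Fintype α] [DecidableEq α]
    {M k : ℕ} (hα : Fintype.card α = 2 * M) {p : α → Prop} [DecidablePred p]
    (hp : #{x | p x} = 2 * k) :
    #{σ : Perm α | IsFixedPointFreeInvolution σ ∧ ∀ x, p x → p (σ x)} =
      (2 * k - 1)‼ * (2 * (M - k) - 1)‼ := by
  have hin : Fintype.card {x // p x} = 2 * k := by rw [Fintype.card_subtype, hp]
  have hout : Fintype.card {x // ¬ p x} = 2 * (M - k) := by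
    rw [Fintype.card_subtype_compl, hin, hα, Nat.mul_sub]
  rw [card_isFixedPointFreeInvolution_and_invariant_eq_mul, card_isFixedPointFreeInvolution hin,
    card_isFixedPointFreeInvolution hout]

theorem filter_two_mul_le_card_subset_biUnion_powersetCard {α : Type*} [Fintype α] [DecidableEq α]
    (A : Finset α) (k : ℕ) :
    ({σ : Perm α | IsFixedPointFreeInvolution σ ∧ 2 * k ≤ #{x ∈ A | σ x ∈ A}} : Finset _) ⊆
      (A.powersetCard (2 * k)).biUnion fun T ↦
        {σ | IsFixedPointFreeInvolution σ ∧ ∀ x ∈ T, σ x ∈ T} := by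
  intro σ hσk
  obtain ⟨hσ, hk⟩ := mem_filter_univ _ |>.1 hσk
  have hinv : ∀ x ∈ A.filter (σ · ∈ A), σ x ∈ A.filter (σ · ∈ A) := by
    simp +contextual [hσ.involutive _]
  obtain ⟨T, hTA, hT, hTinv⟩ := hσ.exists_invariant_subset_card_eq hinv hk
  simp only [mem_biUnion, mem_powersetCard, mem_filter_univ]
  exact ⟨T, ⟨hTA.trans (filter_subset _ _), hT⟩, hσ, hTinv⟩

end

/-- Let `α` have cardinality `2M` and `A ⊆ α` have cardinality `D`, and let `k ≤ M`.
The number of fixed-point-free involutions of `α` with at least `k` orbits `{x, σ x}`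
contained in `A` (equivalently, with at least `2k` elements `x ∈ A` such that `σ x ∈ A`)
is at most `C(D, 2k) · (2k−1)‼ · (2(M−k)−1)‼` (Equation (6) of the paper). -/
theorem card_involutions_many_orbits_le (M D k : ℕ) (α : Type*) [Fintype α] [DecidableEq α]
    (hα : Fintype.card α = 2 * M) (A : Finset α) (hA : A.card = D) (hk : k ≤ M) :
    (Finset.univ.filter
        (fun σ : Equiv.Perm α =>
          (∀ x : α, σ (σ x) = x ∧ σ x ≠ x) ∧
          2 * k ≤ (A.filter (fun x => σ x ∈ A)).card)).card
      ≤ D.choose (2 * k) * (2 * k - 1)‼ * (2 * (M - k) - 1)‼ := by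
  refine (Finset.card_le_card (filter_two_mul_le_card_subset_biUnion_powersetCard A k)).trans ?_
  rw [mul_assoc, ← hA, ← Finset.card_powersetCard]
  refine Finset.card_biUnion_le_card_mul _ _ _ fun T hTA ↦ ?_
  have hT : T.card = 2 * k := (Finset.mem_powersetCard.1 hTA).2
  exact (card_isFixedPointFreeInvolution_and_invariant hα (by simpa using hT)).le
end

section
/- Let α be a finite type with cardinality 2M, let A be a subset of α with cardinality D, and let k ≤ M. Under the uniform probability distribution on the (nonempty) finite set of fixed-point-free involutions of α, the probability that the random involution has at least k orbits {x, σ(x)} contained in A is at most C(D, 2k) · C(M, k) / C(2M, 2k), as a rational number. -/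
/-!
Let `X` be the number of edges of a uniformly random perfect matching of `α` lying inside `A`.
By Markov's inequality, `P(X ≥ k) ≤ E[C(X, k)]`. A choice of `k` edges inside `A` amounts to a
`2k`-subset of `A` stable under the matching, and by conjugation symmetry all `2k`-subsets of `α`
are equally likely to be stable. Hence `E[C(X, k)]` is proportional to `C(D, 2k)`, with a factor
that is read off at `A = α`, where `X = M` is constant: it is `C(M, k) / C(2M, 2k)`. So the bound
is exactly the `k`-th binomial moment of `X`.
-/

open Nat

section

open Equiv Finset Function
open scoped Pointwise

variable {α : Type*} {σ : α → α}

lemma mk_apply_eq_mk_apply_iff (hσ : Involutive σ) {x y : α} :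
    s(y, σ y) = s(x, σ x) ↔ y = x ∨ y = σ x := by
  rw [Sym2.eq_iff]
  constructor
  · rintro (⟨h, -⟩ | ⟨h, -⟩)
    exacts [.inl h, .inr h]
  · rintro (rfl | rfl)
    exacts [.inl ⟨rfl, rfl⟩, .inr ⟨rfl, hσ x⟩]

variable [DecidableEq α] {A T : Finset α}

/-- The edges `{x, σ x}` of a matching `σ` with both ends in `A`: the internal edges of the
community whose half-edges are `A`. They are encoded as unordered pairs, so that an edge does not
remember which of its two ends it was obtained from. -/
def internalEdges (σ : α → α) (A : Finset α) : Finset (Sym2 α) :=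
  {x ∈ A | σ x ∈ A}.image fun x ↦ s(x, σ x)

lemma mk_apply_mem_internalEdges (hσ : Involutive σ) {x : α} :
    s(x, σ x) ∈ internalEdges σ A ↔ x ∈ A ∧ σ x ∈ A := by
  simp only [internalEdges, mem_image, mem_filter, mk_apply_eq_mk_apply_iff hσ]
  constructor
  · rintro ⟨y, ⟨hy, hσy⟩, rfl | rfl⟩
    exacts [⟨hy, hσy⟩, ⟨hσ x ▸ hσy, hy⟩]
  · exact fun hx ↦ ⟨x, hx, .inl rfl⟩

lemma internalEdges_mono (σ : α → α) (h : T ⊆ A) : internalEdges σ T ⊆ internalEdges σ A :=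
  image_subset_image fun x hx ↦ by
    rw [mem_filter] at hx ⊢
    exact ⟨h hx.1, h hx.2⟩

lemma card_filter_apply_mem (hσ : Involutive σ) (hfix : ∀ x, σ x ≠ x) (A : Finset α) :
    #{x ∈ A | σ x ∈ A} = 2 * #(internalEdges σ A) := by
  have card_fiber : ∀ e ∈ internalEdges σ A, #{x ∈ {x ∈ A | σ x ∈ A} | s(x, σ x) = e} = 2 := by
    intro e he
    obtain ⟨x, hx, rfl⟩ := mem_image.1 he
    rw [mem_filter] at hx
    have fiber_eq : {y ∈ {y ∈ A | σ y ∈ A} | s(y, σ y) = s(x, σ x)} = {x, σ x} := by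
      ext y
      simp only [mem_filter, mk_apply_eq_mk_apply_iff hσ, mem_insert, mem_singleton,
        and_iff_right_iff_imp]
      rintro (rfl | rfl)
      exacts [hx, ⟨hx.2, (hσ x).symm ▸ hx.1⟩]
    rw [fiber_eq, card_pair (hfix x).symm]
  rw [card_eq_sum_card_image (fun x ↦ s(x, σ x)), ← internalEdges, sum_const_nat card_fiber,
    mul_comm]

lemma card_eq_two_mul_card_internalEdges (hσ : Involutive σ) (hfix : ∀ x, σ x ≠ x)
    (hT : ∀ x ∈ T, σ x ∈ T) : #T = 2 * #(internalEdges σ T) := by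
  rw [← card_filter_apply_mem hσ hfix, filter_true_of_mem hT]

lemma filter_mk_apply_mem_internalEdges (hσ : Involutive σ) (hTA : T ⊆ A)
    (hT : ∀ x ∈ T, σ x ∈ T) : {x ∈ A | s(x, σ x) ∈ internalEdges σ T} = T := by
  ext x
  rw [mem_filter, mk_apply_mem_internalEdges hσ]
  exact ⟨fun h ↦ h.2.1, fun h ↦ ⟨hTA h, h, hT x h⟩⟩

lemma apply_mem_filter_mk_apply_mem (hσ : Involutive σ) {Q : Finset (Sym2 α)}
    (hQ : Q ⊆ internalEdges σ A) :
    ∀ x ∈ ({x ∈ A | s(x, σ x) ∈ Q} : Finset α), σ x ∈ ({x ∈ A | s(x, σ x) ∈ Q} : Finset α) := by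
  intro x hx
  rw [mem_filter] at hx ⊢
  rw [hσ x, Sym2.eq_swap]
  exact ⟨((mk_apply_mem_internalEdges hσ).1 (hQ hx.2)).2, hx.2⟩

lemma internalEdges_filter_mk_apply_mem (hσ : Involutive σ) {Q : Finset (Sym2 α)}
    (hQ : Q ⊆ internalEdges σ A) : internalEdges σ {x ∈ A | s(x, σ x) ∈ Q} = Q := by
  rw [internalEdges, filter_true_of_mem (apply_mem_filter_mk_apply_mem hσ hQ)]
  ext e
  simp only [mem_image, mem_filter]
  constructor
  · rintro ⟨x, ⟨-, hx⟩, rfl⟩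
    exact hx
  · intro he
    obtain ⟨x, hx, rfl⟩ := mem_image.1 (hQ he)
    exact ⟨x, ⟨(mem_filter.1 hx).1, he⟩, rfl⟩

theorem card_invariant_powersetCard (hσ : Involutive σ) (hfix : ∀ x, σ x ≠ x)
    [DecidablePred fun T : Finset α ↦ ∀ x ∈ T, σ x ∈ T] (A : Finset α) (k : ℕ) :
    #{T ∈ A.powersetCard (2 * k) | ∀ x ∈ T, σ x ∈ T} = (#(internalEdges σ A)).choose k := by
  rw [← card_powersetCard]
  refine card_nbij' (internalEdges σ) (fun Q ↦ {x ∈ A | s(x, σ x) ∈ Q}) ?_ ?_ ?_ ?_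
  · intro T hT
    simp only [mem_coe, mem_filter, mem_powersetCard] at hT ⊢
    obtain ⟨⟨hTA, hcard⟩, hinv⟩ := hT
    rw [card_eq_two_mul_card_internalEdges hσ hfix hinv] at hcard
    exact ⟨internalEdges_mono σ hTA, by lia⟩
  · intro Q hQ
    simp only [mem_coe, mem_filter (p := fun T ↦ ∀ x ∈ T, σ x ∈ T), mem_powersetCard] at hQ ⊢
    have hinv := apply_mem_filter_mk_apply_mem hσ hQ.1
    refine ⟨⟨filter_subset _ _, ?_⟩, hinv⟩
    rw [card_eq_two_mul_card_internalEdges hσ hfix hinv, internalEdges_filter_mk_apply_mem hσ hQ.1,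
      hQ.2]
  · intro T hT
    simp only [mem_coe, mem_filter, mem_powersetCard] at hT
    exact filter_mk_apply_mem_internalEdges hσ hT.1.1 hT.2
  · exact fun Q hQ ↦ internalEdges_filter_mk_apply_mem hσ (mem_powersetCard.1 hQ).1

lemma card_filter_le_sum_choose {ι : Type*} (s : Finset ι) (X : ι → ℕ) (k : ℕ) :
    #{i ∈ s | k ≤ X i} ≤ ∑ i ∈ s, (X i).choose k := by
  rw [card_filter]
  refine sum_le_sum fun i _ ↦ ?_
  split_ifs with h
  exacts [Nat.choose_pos h, Nat.zero_le _]

variable [Fintype α]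

lemma choose_nsmul_sum_powersetCard_of_perm_invariant {β : Type*} [AddCommMonoid β]
    {f : Finset α → β} (hf : ∀ (g : Perm α) T, f (g • T) = f T) (A : Finset α) (n : ℕ) :
    (Fintype.card α).choose n • ∑ T ∈ A.powersetCard n, f T =
      (#A).choose n • ∑ T ∈ powersetCard n univ, f T := by
  have f_congr : ∀ S ∈ powersetCard n univ, ∀ T ∈ A.powersetCard n, f T = f S := by
    intro S hS T hT
    obtain ⟨g, hg⟩ := Set.powersetCard.isPretransitive.exists_smul_eq
      (⟨S, (mem_powersetCard.1 hS).2⟩ : Set.powersetCard α n) ⟨T, (mem_powersetCard.1 hT).2⟩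
    rw [← hf g S]
    exact congrArg f (congrArg Subtype.val hg).symm
  calc (Fintype.card α).choose n • ∑ T ∈ A.powersetCard n, f T
      = ∑ _S ∈ powersetCard n univ, ∑ T ∈ A.powersetCard n, f T := by
        rw [sum_const, card_powersetCard, Finset.card_univ]
    _ = ∑ S ∈ powersetCard n univ, ∑ _T ∈ A.powersetCard n, f S :=
        sum_congr rfl fun S hS ↦ sum_congr rfl (f_congr S hS)
    _ = (#A).choose n • ∑ T ∈ powersetCard n univ, f T := by
        simp only [sum_const, card_powersetCard, smul_sum]

variable (α) in
/-- The perfect matchings of `α`, encoded as the fixed-point-free involutions `σ`, which match `x`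
with `σ x`. The uniform distribution on them is the configuration model on the half-edges `α`. -/
def perfectMatchings : Finset (Perm α) :=
  {σ | ∀ x, σ (σ x) = x ∧ σ x ≠ x}

lemma mem_perfectMatchings {σ : Perm α} :
    σ ∈ perfectMatchings α ↔ Involutive σ ∧ ∀ x, σ x ≠ x := by
  rw [perfectMatchings, mem_filter_univ, forall_and, Involutive]

lemma conj_mem_perfectMatchings (g σ : Perm α) :
    MulAut.conj g σ ∈ perfectMatchings α ↔ σ ∈ perfectMatchings α := by
  simp only [perfectMatchings, mem_filter_univ]
  rw [← g.forall_congr_right]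
  simp

lemma card_perfectMatchings_invariant_smul (g : Perm α) (T : Finset α) :
    #{σ ∈ perfectMatchings α | ∀ x ∈ g • T, σ x ∈ g • T} =
      #{σ ∈ perfectMatchings α | ∀ x ∈ T, σ x ∈ T} := by
  refine (card_equiv (MulAut.conj g).toEquiv fun σ ↦ ?_).symm
  have invariant_iff : (∀ x ∈ g • T, MulAut.conj g σ x ∈ g • T) ↔ ∀ x ∈ T, σ x ∈ T := by
    simp [smul_finset_def]
  rw [mem_filter, mem_filter, MulEquiv.toEquiv_eq_coe, EquivLike.coe_coe,
    conj_mem_perfectMatchings, invariant_iff]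

lemma sum_choose_card_internalEdges (A : Finset α) (k : ℕ) :
    ∑ σ ∈ perfectMatchings α, (#(internalEdges σ A)).choose k =
      ∑ T ∈ A.powersetCard (2 * k), #{σ ∈ perfectMatchings α | ∀ x ∈ T, σ x ∈ T} := by
  calc ∑ σ ∈ perfectMatchings α, (#(internalEdges σ A)).choose k
      = ∑ σ ∈ perfectMatchings α, #{T ∈ A.powersetCard (2 * k) | ∀ x ∈ T, σ x ∈ T} := by
        refine sum_congr rfl fun σ hσ ↦ ?_
        obtain ⟨hinv, hfix⟩ := mem_perfectMatchings.1 hσ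
        exact (card_invariant_powersetCard hinv hfix A k).symm
    _ = ∑ T ∈ A.powersetCard (2 * k), #{σ ∈ perfectMatchings α | ∀ x ∈ T, σ x ∈ T} :=
        sum_card_bipartiteAbove_eq_sum_card_bipartiteBelow
          fun (σ : Perm α) T ↦ ∀ x ∈ T, σ x ∈ T

lemma card_internalEdges_univ {M : ℕ} (hα : Fintype.card α = 2 * M) (hσ : Involutive σ)
    (hfix : ∀ x, σ x ≠ x) : #(internalEdges σ univ) = M := by
  have := card_eq_two_mul_card_internalEdges hσ hfix fun x _ ↦ mem_univ (σ x)
  rw [Finset.card_univ, hα] at this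
  lia

theorem choose_mul_sum_choose_card_internalEdges {M : ℕ} (hα : Fintype.card α = 2 * M)
    (A : Finset α) (k : ℕ) :
    (2 * M).choose (2 * k) * ∑ σ ∈ perfectMatchings α, (#(internalEdges σ A)).choose k =
      (#A).choose (2 * k) * M.choose k * #(perfectMatchings α) := by
  have sum_univ : ∑ σ ∈ perfectMatchings α, (#(internalEdges σ univ)).choose k =
      #(perfectMatchings α) * M.choose k := by
    refine sum_const_nat fun σ hσ ↦ ?_
    obtain ⟨hinv, hfix⟩ := mem_perfectMatchings.1 hσ
    rw [card_internalEdges_univ hα hinv hfix]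
  have symmetry := choose_nsmul_sum_powersetCard_of_perm_invariant
    (f := fun T ↦ #{σ ∈ perfectMatchings α | ∀ x ∈ T, σ x ∈ T})
    card_perfectMatchings_invariant_smul A (2 * k)
  rw [← sum_choose_card_internalEdges, ← sum_choose_card_internalEdges, sum_univ, hα] at symmetry
  rw [← smul_eq_mul, symmetry, smul_eq_mul]
  ring

lemma filter_two_mul_le_eq_filter_le_card_internalEdges (A : Finset α) (k : ℕ) :
    ({σ : Perm α | (∀ x, σ (σ x) = x ∧ σ x ≠ x) ∧ 2 * k ≤ #{x ∈ A | σ x ∈ A}} : Finset (Perm α)) =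
      (perfectMatchings α).filter fun σ : Perm α ↦ k ≤ #(internalEdges σ A) := by
  rw [perfectMatchings, filter_filter]
  refine filter_congr fun σ _ ↦ and_congr_right fun hσ ↦ ?_
  rw [card_filter_apply_mem (fun x ↦ (hσ x).1) fun x ↦ (hσ x).2]
  lia

end

/-- Let `α` have cardinality `2M`, let `A ⊆ α` have cardinality `D`, and let `k ≤ M`.
Under the uniform distribution on the (nonempty) finite set of fixed-point-free
involutions of `α`, the probability that the random involution has at least `k` orbits
`{x, σ x}` contained in `A` (i.e., at least `2k` elements `x ∈ A` with `σ x ∈ A`) is at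
most `C(D, 2k) · C(M, k) / C(2M, 2k)` as a rational number (the p-value bound of the
paper, Equations (4) and (7)). -/
theorem pvalue_upper_bound_prob (M D k : ℕ) (α : Type*) [Fintype α] [DecidableEq α]
    (hα : Fintype.card α = 2 * M) (A : Finset α) (hA : A.card = D) (hk : k ≤ M)
    (hne : (Finset.univ.filter
        (fun σ : Equiv.Perm α => ∀ x : α, σ (σ x) = x ∧ σ x ≠ x)).Nonempty) :
    ((Finset.univ.filter
        (fun σ : Equiv.Perm α =>
          (∀ x : α, σ (σ x) = x ∧ σ x ≠ x) ∧
          2 * k ≤ (A.filter (fun x => σ x ∈ A)).card)).card : ℚ)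
        / ((Finset.univ.filter
            (fun σ : Equiv.Perm α => ∀ x : α, σ (σ x) = x ∧ σ x ≠ x)).card : ℚ)
      ≤ (D.choose (2 * k) * M.choose k : ℚ) / ((2 * M).choose (2 * k) : ℚ) := by
  rw [filter_two_mul_le_eq_filter_le_card_internalEdges, ← perfectMatchings]
  have matchings_pos : (0 : ℚ) < (perfectMatchings α).card := mod_cast hne.card_pos
  have choose_pos : (0 : ℚ) < (2 * M).choose (2 * k) := mod_cast Nat.choose_pos (by lia)
  rw [div_le_div_iff₀ matchings_pos choose_pos]
  norm_cast
  calc ((perfectMatchings α).filter fun σ : Equiv.Perm α ↦ k ≤ (internalEdges σ A).card).card *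
        (2 * M).choose (2 * k)
      ≤ (∑ σ ∈ perfectMatchings α, (internalEdges σ A).card.choose k) * (2 * M).choose (2 * k) :=
        Nat.mul_le_mul_right _ (card_filter_le_sum_choose _ _ k)
    _ = D.choose (2 * k) * M.choose k * (perfectMatchings α).card := by
        rw [mul_comm, choose_mul_sum_choose_card_internalEdges hα, hA]
end

section
/- Let α be a finite type with cardinality 2M and let A be a subset of α with cardinality exactly 2k, where k ≤ M. Under the uniform distribution on fixed-point-free involutions of α, the probability that the random involution has at least k orbits contained in A equals exactly C(M, k) / C(2M, 2k). In particular, since C(2k, 2k) = 1, the paper's upper bound C(|A|, 2k)·C(M, k)/C(2M, 2k) is attained with equality when |A| = 2k, i.e., the bound is tight. -/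
open Nat

/-!
A permutation keeps at least `#A` points of `A` inside `A` only if it preserves `A`. A perfect
matching preserving `A` consists of a perfect matching of `A` and one of its complement, so with
`#A = 2k` there are `(2k - 1)‼ * (2(M - k) - 1)‼` of them among the `(2M - 1)‼` perfect matchings
of `α`. The ratio is `C(M, k) / C(2M, 2k)` because `(2n)! = (2n - 1)‼ * (2 ^ n * n!)`.
-/

section DoubleFactorial

theorem doubleFactorial_two_mul_sub_one_mul (n : ℕ) :
    (2 * n - 1)‼ * (2 ^ n * n !) = (2 * n)! := by
  rw [← doubleFactorial_two_mul]
  cases n with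
  | zero => rfl
  | succ n => exact (mul_comm _ _).trans (factorial_eq_mul_doubleFactorial (2 * n + 1)).symm

theorem choose_two_mul_mul_doubleFactorial {n k : ℕ} (hk : k ≤ n) :
    (2 * n).choose (2 * k) * ((2 * k - 1)‼ * (2 * (n - k) - 1)‼) =
      n.choose k * (2 * n - 1)‼ := by
  have hpow : 2 ^ k * 2 ^ (n - k) = 2 ^ n := by rw [← pow_add, Nat.add_sub_cancel' hk]
  have hpos : 0 < 2 ^ n * k ! * (n - k)! := by positivity
  refine Nat.eq_of_mul_eq_mul_right hpos ?_
  calc (2 * n).choose (2 * k) * ((2 * k - 1)‼ * (2 * (n - k) - 1)‼) * (2 ^ n * k ! * (n - k)!)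
      = (2 * n).choose (2 * k) * ((2 * k - 1)‼ * (2 ^ k * k !)) *
          ((2 * (n - k) - 1)‼ * (2 ^ (n - k) * (n - k)!)) := by rw [← hpow]; ring
    _ = (2 * n)! := by
      rw [doubleFactorial_two_mul_sub_one_mul, doubleFactorial_two_mul_sub_one_mul, Nat.mul_sub,
        choose_mul_factorial_mul_factorial (Nat.mul_le_mul_left 2 hk)]
    _ = (2 * n - 1)‼ * (2 ^ n * (n.choose k * k ! * (n - k)!)) := by
      rw [choose_mul_factorial_mul_factorial hk, doubleFactorial_two_mul_sub_one_mul]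
    _ = n.choose k * (2 * n - 1)‼ * (2 ^ n * k ! * (n - k)!) := by ring

end DoubleFactorial

section CycleType

variable {α : Type*} [Fintype α] [DecidableEq α]

theorem cycleType_eq_replicate_iff {p n : ℕ} [Fact p.Prime] (hα : Fintype.card α = p * n)
    (σ : Equiv.Perm α) :
    σ.cycleType = Multiset.replicate n p ↔ σ ^ p = 1 ∧ σ.support = Finset.univ := by
  have hp : 0 < p := (Fact.out : p.Prime).pos
  have hsum := σ.sum_cycleType
  rw [Equiv.Perm.pow_prime_eq_one_iff, ← Finset.card_eq_iff_eq_univ, hα, ← hsum,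
    Multiset.eq_replicate, and_comm]
  refine and_congr_right fun hall ↦ ?_
  rw [Multiset.eq_replicate_card.2 hall, Multiset.sum_replicate, Multiset.card_replicate,
    smul_eq_mul, mul_comm p, Nat.mul_left_inj hp.ne']

theorem card_cycleType_eq_replicate_mul_s8 {d n : ℕ} (hd : 2 ≤ d) (hα : Fintype.card α = d * n) :
    (Finset.univ.filter fun σ : Equiv.Perm α ↦ σ.cycleType = Multiset.replicate n d).card *
      (d ^ n * n !) = (d * n)! := by
  have hcount : ∏ c ∈ (Multiset.replicate n d).toFinset, ((Multiset.replicate n d).count c)! =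
      n ! := by
    rcases eq_or_ne n 0 with rfl | hn
    · rfl
    · rw [Multiset.toFinset_replicate, if_neg hn, Finset.prod_singleton,
        Multiset.count_replicate_self]
  have hexists : (Multiset.replicate n d).sum ≤ Fintype.card α ∧
      ∀ c ∈ Multiset.replicate n d, 2 ≤ c :=
    ⟨by simp [hα, mul_comm], fun c hc ↦ (Multiset.eq_of_mem_replicate hc).symm ▸ hd⟩
  have hcard := Equiv.Perm.card_of_cycleType_mul_eq α (Multiset.replicate n d)
  rwa [if_pos hexists, hcount, Multiset.sum_replicate, Multiset.prod_replicate, hα, smul_eq_mul,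
    mul_comm n d, Nat.sub_self, factorial_zero, one_mul] at hcard

end CycleType

section InvariantSet

variable {α : Type*}

theorem card_le_card_filter_apply_mem_iff [DecidableEq α] (σ : Equiv.Perm α) (A : Finset α) :
    A.card ≤ (A.filter fun x ↦ σ x ∈ A).card ↔ ∀ x, σ x ∈ A ↔ x ∈ A := by
  rw [(Finset.card_filter_le _ _).ge_iff_eq', eq_comm, Finset.card_filter_eq_iff]
  refine ⟨fun hmaps x ↦ ?_, fun hinv x ↦ (hinv x).2⟩
  have hsub : A.map σ.toEmbedding ⊆ A := by
    rw [Finset.map_eq_image]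
    exact Finset.image_subset_iff.2 hmaps
  have hmap : A.map σ.toEmbedding = A :=
    Finset.eq_of_subset_of_card_le hsub (Finset.card_map _).ge
  calc σ x ∈ A ↔ σ.toEmbedding x ∈ A.map σ.toEmbedding := by rw [hmap, Equiv.coe_toEmbedding]
    _ ↔ x ∈ A := Finset.mem_map' σ.toEmbedding

theorem mem_range_subtypeCongrHom_iff (p : α → Prop) [DecidablePred p] (σ : Equiv.Perm α) :
    σ ∈ (Equiv.Perm.subtypeCongrHom p).range ↔ ∀ x, p (σ x) ↔ p x := by
  constructor
  · rintro ⟨⟨τ, ρ⟩, rfl⟩ x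
    by_cases hx : p x
    · simpa [Equiv.Perm.subtypeCongrHom, Equiv.Perm.subtypeCongr.left_apply τ ρ hx, hx]
        using (τ ⟨x, hx⟩).2
    · simpa [Equiv.Perm.subtypeCongrHom, Equiv.Perm.subtypeCongr.right_apply τ ρ hx, hx]
        using (ρ ⟨x, hx⟩).2
  · intro hσ
    refine ⟨(σ.subtypePerm hσ, σ.subtypePerm fun x ↦ not_congr (hσ x)), Equiv.ext fun x ↦ ?_⟩
    by_cases hx : p x <;> simp [Equiv.Perm.subtypeCongrHom, hx]

end InvariantSet

section FixedPointFreeInvolutions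

variable (α : Type*) [Fintype α] [DecidableEq α]

/-- The fixed-point-free involutions of `α`, which encode the perfect matchings of `α` into pairs
`{x, σ x}`. -/
def fixedPointFreeInvolutions : Finset (Equiv.Perm α) :=
  Finset.univ.filter fun σ ↦ ∀ x, σ (σ x) = x ∧ σ x ≠ x

variable {α}

theorem mem_fixedPointFreeInvolutions {σ : Equiv.Perm α} :
    σ ∈ fixedPointFreeInvolutions α ↔ ∀ x, σ (σ x) = x ∧ σ x ≠ x := by
  simp only [fixedPointFreeInvolutions, Finset.mem_filter_univ]

theorem mem_fixedPointFreeInvolutions_iff_pow_support {σ : Equiv.Perm α} :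
    σ ∈ fixedPointFreeInvolutions α ↔ σ ^ 2 = 1 ∧ σ.support = Finset.univ := by
  simp [mem_fixedPointFreeInvolutions, forall_and, Equiv.ext_iff, pow_two,
    Finset.eq_univ_iff_forall]

theorem card_fixedPointFreeInvolutions {n : ℕ} (hα : Fintype.card α = 2 * n) :
    (fixedPointFreeInvolutions α).card = (2 * n - 1)‼ := by
  have hcycle : fixedPointFreeInvolutions α =
      Finset.univ.filter fun σ ↦ σ.cycleType = Multiset.replicate n 2 := by
    ext σ
    rw [mem_fixedPointFreeInvolutions_iff_pow_support, Finset.mem_filter_univ,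
      cycleType_eq_replicate_iff hα]
  have hpos : 0 < 2 ^ n * n ! := by positivity
  refine Nat.eq_of_mul_eq_mul_right hpos ?_
  rw [hcycle, card_cycleType_eq_replicate_mul_s8 le_rfl hα, doubleFactorial_two_mul_sub_one_mul]

theorem subtypeCongr_mem_fixedPointFreeInvolutions {p : α → Prop} [DecidablePred p]
    [Fintype {x // p x}] [Fintype {x // ¬p x}]
    {τ : Equiv.Perm {x // p x}} {ρ : Equiv.Perm {x // ¬p x}} :
    τ.subtypeCongr ρ ∈ fixedPointFreeInvolutions α ↔
      τ ∈ fixedPointFreeInvolutions {x // p x} ∧ ρ ∈ fixedPointFreeInvolutions {x // ¬p x} := by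
  have hτ (x : {x // p x}) : (τ.subtypeCongr ρ (τ.subtypeCongr ρ x) = x ∧
      τ.subtypeCongr ρ x ≠ x) ↔ τ (τ x) = x ∧ τ x ≠ x := by
    simp only [Equiv.Perm.subtypeCongr.left_apply_subtype, Subtype.ext_iff, ne_eq]
  have hρ (x : {x // ¬p x}) : (τ.subtypeCongr ρ (τ.subtypeCongr ρ x) = x ∧
      τ.subtypeCongr ρ x ≠ x) ↔ ρ (ρ x) = x ∧ ρ x ≠ x := by
    simp only [Equiv.Perm.subtypeCongr.right_apply_subtype, Subtype.ext_iff, ne_eq]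
  simp only [mem_fixedPointFreeInvolutions, ← hτ, ← hρ, Subtype.forall, ← forall_and,
    ← or_imp, em, true_imp_iff]

theorem card_filter_invariant_fixedPointFreeInvolutions (p : α → Prop) [DecidablePred p]
    [Fintype {x // p x}] [Fintype {x // ¬p x}] :
    ((fixedPointFreeInvolutions α).filter fun σ ↦ ∀ x, p (σ x) ↔ p x).card =
      (fixedPointFreeInvolutions {x // p x}).card *
        (fixedPointFreeInvolutions {x // ¬p x}).card := by
  rw [← Finset.card_product,
    ← Finset.card_image_of_injective _ (Equiv.Perm.subtypeCongrHom_injective p)]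
  congr 1
  ext σ
  rw [Finset.mem_filter, ← mem_range_subtypeCongrHom_iff, Finset.mem_image]
  constructor
  · rintro ⟨hσ, ⟨τ, ρ⟩, rfl⟩
    exact ⟨(τ, ρ), Finset.mem_product.2 (subtypeCongr_mem_fixedPointFreeInvolutions.1 hσ), rfl⟩
  · rintro ⟨⟨τ, ρ⟩, hτρ, rfl⟩
    exact ⟨subtypeCongr_mem_fixedPointFreeInvolutions.2 (Finset.mem_product.1 hτρ), (τ, ρ), rfl⟩

theorem card_filter_card_le_fixedPointFreeInvolutions {n k : ℕ} (hα : Fintype.card α = 2 * n)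
    {A : Finset α} (hA : A.card = 2 * k) :
    ((fixedPointFreeInvolutions α).filter
        fun σ ↦ A.card ≤ (A.filter fun x ↦ σ x ∈ A).card).card =
      (2 * k - 1)‼ * (2 * (n - k) - 1)‼ := by
  have hmem : Fintype.card {x // x ∈ A} = 2 * k := by rw [Fintype.card_coe, hA]
  have hnotMem : Fintype.card {x // x ∉ A} = 2 * (n - k) := by
    rw [Fintype.card_subtype_compl, hα, hmem, Nat.mul_sub]
  simp only [card_le_card_filter_apply_mem_iff]
  rw [card_filter_invariant_fixedPointFreeInvolutions (· ∈ A),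
    card_fixedPointFreeInvolutions hmem, card_fixedPointFreeInvolutions hnotMem]

end FixedPointFreeInvolutions

/-- Let `α` have cardinality `2M` and let `A ⊆ α` have cardinality exactly `2k`, `k ≤ M`.
Under the uniform distribution on fixed-point-free involutions of `α`, the probability
that the random involution has at least `k` orbits `{x, σ x}` contained in `A` equals
exactly `C(M, k) / C(2M, 2k)`; since `C(2k, 2k) = 1`, the paper's upper bound
`C(|A|, 2k)·C(M, k)/C(2M, 2k)` is attained with equality when `|A| = 2k`,
i.e., the bound is tight. -/
theorem pvalue_bound_tight (M k : ℕ) (α : Type*) [Fintype α] [DecidableEq α]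
    (hα : Fintype.card α = 2 * M) (A : Finset α) (hA : A.card = 2 * k) (hk : k ≤ M) :
    ((Finset.univ.filter
        (fun σ : Equiv.Perm α =>
          (∀ x : α, σ (σ x) = x ∧ σ x ≠ x) ∧
          2 * k ≤ (A.filter (fun x => σ x ∈ A)).card)).card : ℚ)
        / ((Finset.univ.filter
            (fun σ : Equiv.Perm α => ∀ x : α, σ (σ x) = x ∧ σ x ≠ x)).card : ℚ)
      = (M.choose k : ℚ) / ((2 * M).choose (2 * k) : ℚ) ∧
    (A.card.choose (2 * k) * M.choose k : ℚ) / ((2 * M).choose (2 * k) : ℚ)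
      = (M.choose k : ℚ) / ((2 * M).choose (2 * k) : ℚ) := by
  refine ⟨?_, by rw [hA, choose_self, cast_one, one_mul]⟩
  rw [← Finset.filter_filter, ← hA]
  change (((fixedPointFreeInvolutions α).filter _).card : ℚ) /
    ((fixedPointFreeInvolutions α).card : ℚ) = _
  rw [card_filter_card_le_fixedPointFreeInvolutions hα hA, card_fixedPointFreeInvolutions hα, hA]
  have htotal : ((2 * M - 1)‼ : ℚ) ≠ 0 := cast_ne_zero.2 (doubleFactorial_pos _).ne'
  have hchoose : ((2 * M).choose (2 * k) : ℚ) ≠ 0 :=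
    cast_ne_zero.2 (choose_pos (Nat.mul_le_mul_left 2 hk)).ne'
  rw [div_eq_div_iff htotal hchoose, mul_comm]
  exact_mod_cast choose_two_mul_mul_doubleFactorial hk
end
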